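/- arXiv:2301.03763 — 3 statements merged into one kernel-verified Lean document; each statement's English description precedes it below -/
import Mathlib

section
/- There is an absolute constant c > 0 with the following property. Let B ≥ 1, δ ∈ (0, 1/2], c₀ ≥ 0, ℓ ∈ (0, 1], and let v ∈ ℝ^n satisfy ‖v‖_∞ ≤ B and −c₀ ≤ max_{j∈[n]} v_j ≤ 0. Let q ∈ ℝ^n satisfy q_j ∈ [ℓ, 1] for all j, and set u_j := v_j/(2B). Then there exists a real polynomial P of degree at most c · B · (c₀ + log(n/(ℓδ))) such that: (i) |P(x)| ≤ 1/2 for all x ∈ [−1, 1]; (ii) defining w_j := P(u_j)² q_j and z_j := exp(2B u_j) q_j for all j ∈ [n], one has ‖w/‖w‖₁ − z/‖z‖₁‖₁ ≤ δ; and (iii) ‖w‖₁ ≥ ((1 − δ)/36)·‖z‖₁. -/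
/-!
The polynomial is a convolution. Put `a = 1 / (10 B)` and consider the truncated exponential
`f t = exp (B min (t, a))`, which is at most `exp (1 / 10)` everywhere. Convolve it on `[-1, 1]` with a
nonnegative polynomial kernel `κ` having all but a fraction `10⁻ᵏ` of its mass in `[-a, a]`. The result
is a polynomial (`exists_conv`); it is bounded because `f` is, and for `x ∈ [-1/2, 0]` the part of the
integral over `[-a, a]` is exactly a constant times `exp (B x)`, while the rest is nonnegative and at
most of order `10⁻ᵏ` (`exists_exp_approx`).

The kernel is the `2 k`-th power of a Fejér kernel of order `m ≈ 100 B` in the variable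
`x = 2 sin (θ / 2)` (`exists_fejer`, `exists_kernel`), so the degree is `O(B k)`. With
`k ≈ c₀ + log (n / (ℓ δ)) + 3` the error `10⁻ᵏ` is small compared with `δ ‖z‖₁ / n`, since
`‖z‖₁ ≥ exp (-c₀) ℓ`; then `normalize_le` gives the estimate of the normalized vectors. The error
being one-sided, `w ≥ α² z` entrywise with `α ≥ 1 / 6`, which is the lower bound on `‖w‖₁`.
-/

noncomputable section

section

open Polynomial

/-! ### Convolution with a polynomial -/

/-- Convolving a continuous function on `[-1, 1]` with a polynomial kernel gives a polynomial: expand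
`κ (x - t)` in powers of `x` (Taylor expansion of `κ` at `-t`) and integrate the coefficients. -/
theorem exists_conv (f : ℝ → ℝ) (hf : Continuous f) (κ : ℝ[X]) :
    ∃ P : ℝ[X], P.natDegree ≤ κ.natDegree ∧
      ∀ x, P.eval x = ∫ t in (-1:ℝ)..1, f t * κ.eval (x - t) := by
  refine ⟨∑ k ∈ Finset.range (κ.natDegree + 1), C (∫ t in (-1:ℝ)..1, f t *
    (taylor (-t) κ).coeff k) * X ^ k, ?_, fun x => ?_⟩
  · refine natDegree_sum_le_of_forall_le _ _ fun k hk => ?_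
    exact (natDegree_C_mul_X_pow_le _ _).trans (Nat.lt_succ_iff.1 (Finset.mem_range.1 hk))
  · have hc : ∀ k, Continuous fun t : ℝ => (taylor (-t) κ).coeff k := by
      intro k
      simp only [taylor_coeff]
      fun_prop
    rw [eval_finsetSum]
    simp only [eval_mul, eval_C, eval_pow, eval_X]
    simp_rw [← intervalIntegral.integral_mul_const]
    rw [← intervalIntegral.integral_finsetSum]
    · congr 1
      ext t
      have h := taylor_eval (-t) κ x
      rw [← sub_eq_add_neg] at h
      rw [← h, eval_eq_sum_range, natDegree_taylor, Finset.mul_sum]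
      exact Finset.sum_congr rfl fun k _ => by ring
    · intro k _
      exact ((hf.mul (hc k)).mul continuous_const).intervalIntegrable _ _

/-! ### Fejér-type kernels -/

/-- The Fejér kernel written in the variable `x = 2 sin (θ / 2)`, i.e. `cos θ = 1 - x² / 2`:
`F x = (1 - cos (m θ)) / (m² (1 - cos θ))`. It is a polynomial since `1 - T_m` vanishes at `1`. The two
estimates say that it has a peak of width about `1 / m` at `0` and decays like `1 / (m x)²`.
The value at `0` itself is left out: there the closed formula degenerates to `0 / 0`. -/
theorem exists_fejer (m : ℕ) (hm : 1 ≤ m) :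
    ∃ F : ℝ[X], F.natDegree ≤ 2 * m ∧
      (∀ x ∈ Set.Ioo (0:ℝ) (2 / m), 2 / 5 ≤ F.eval x) ∧
      (∀ x : ℝ, 0 < |x| → |x| ≤ 2 → |F.eval x| ≤ 4 / (m ^ 2 * x ^ 2)) := by
  have hm0 : (1:ℝ) ≤ m := by exact_mod_cast hm
  have hroot : IsRoot (1 - Chebyshev.T ℝ m) 1 := by simp [Chebyshev.T_eval_one]
  set G := (1 - Chebyshev.T ℝ m) /ₘ (X - C 1) with hG
  have hGm : (X - C 1) * G = 1 - Chebyshev.T ℝ m := mul_divByMonic_eq_iff_isRoot.2 hroot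
  have hGdeg : G.natDegree ≤ m := by
    rw [hG, natDegree_divByMonic _ (monic_X_sub_C _)]
    refine (Nat.sub_le _ _).trans ((natDegree_sub_le _ _).trans ?_)
    simp
  have hev : ∀ x : ℝ, x ≠ 0 →
      (C (-(1 / (m:ℝ) ^ 2)) * G.comp (1 - C (1/2) * X ^ 2)).eval x =
        (1 - (Chebyshev.T ℝ m).eval (1 - x ^ 2 / 2)) * 2 / (m ^ 2 * x ^ 2) := by
    intro x hx
    have h := congrArg (eval (1 - x ^ 2 / 2)) hGm
    simp only [eval_mul, eval_sub, eval_X, eval_C, eval_one] at h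
    simp only [eval_mul, eval_C, eval_comp, eval_sub, eval_one, eval_pow, eval_X]
    rw [← h, show 1 - 1 / 2 * x ^ 2 = 1 - x ^ 2 / 2 by ring]
    field_simp
    ring
  refine ⟨C (-(1 / (m:ℝ) ^ 2)) * G.comp (1 - C (1/2) * X ^ 2), ?_, ?_, ?_⟩
  · refine (natDegree_C_mul_le _ _).trans (natDegree_comp_le.trans ?_)
    have : (1 - C (1/2:ℝ) * X ^ 2).natDegree ≤ 2 := by compute_degree
    calc _ ≤ m * 2 := Nat.mul_le_mul hGdeg this
      _ = _ := mul_comm _ _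
  · rintro x ⟨h0, h1⟩
    rw [hev x h0.ne']
    have hx2 : x ≤ 2 := h1.le.trans (by rw [div_le_iff₀ (by positivity)]; linarith)
    set θ := Real.arccos (1 - x ^ 2 / 2) with hθ
    have hcos : Real.cos θ = 1 - x ^ 2 / 2 := Real.cos_arccos (by nlinarith) (by nlinarith)
    have hθ0 : 0 ≤ θ := Real.arccos_nonneg _
    have hθπ : θ ≤ Real.pi := Real.arccos_le_pi _
    have hπ := Real.pi_pos
    have hxθ : x ^ 2 ≤ θ ^ 2 := by
      have := Real.one_sub_sq_div_two_le_cos (x := θ)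
      linarith
    -- The Jordan inequality at `θ` keeps `m θ` within the range `[0, π]`.
    have hmθ : m * θ ≤ Real.pi := by
      have h := Real.cos_le_one_sub_mul_cos_sq (x := θ) (by rwa [abs_of_nonneg hθ0])
      rw [hcos] at h
      have h2 : 2 / Real.pi ^ 2 * θ ^ 2 ≤ x ^ 2 / 2 := by linarith
      have h3 : (2 * θ) ^ 2 ≤ (Real.pi * x) ^ 2 := by
        rw [div_mul_eq_mul_div, div_le_iff₀ (by positivity)] at h2
        nlinarith
      have h4 : 2 * θ ≤ Real.pi * x := (sq_le_sq₀ (by positivity) (by positivity)).1 h3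
      have h5 : x * m ≤ 2 := by rw [lt_div_iff₀ (by positivity)] at h1; exact h1.le
      nlinarith
    have hb := Real.cos_le_one_sub_mul_cos_sq (x := m * θ) (by rwa [abs_of_nonneg (by positivity)])
    have hT := Chebyshev.T_real_cos θ (m : ℤ)
    rw [Int.cast_natCast] at hT
    rw [← hcos, hT, le_div_iff₀ (by positivity)]
    have hπ2 : Real.pi ^ 2 ≤ 10 := by nlinarith [Real.pi_lt_d2]
    have h6 : 1 / 5 * (m * θ) ^ 2 ≤ 2 / Real.pi ^ 2 * (m * θ) ^ 2 := by
      apply mul_le_mul_of_nonneg_right _ (by positivity)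
      rw [le_div_iff₀ (by positivity)]; linarith
    have h7 : (m:ℝ) ^ 2 * x ^ 2 ≤ (m * θ) ^ 2 := by rw [mul_pow]; gcongr
    linarith
  · intro x h0 h2
    rw [hev x (abs_pos.1 h0)]
    have hx2 : x ^ 2 ≤ 4 := by rw [← sq_abs]; nlinarith
    have hT := abs_le.1 (Chebyshev.abs_eval_T_real_le_one m (x := 1 - x ^ 2 / 2)
      (by rw [abs_le]; constructor <;> nlinarith [sq_nonneg x]))
    rw [abs_of_nonneg (by apply div_nonneg; linarith [hT.2]; positivity)]
    gcongr
    linarith [hT.1]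

/-- A nonnegative polynomial kernel, a power of the Fejér kernel, of degree `O(k / a)`, which has all but
a fraction `10⁻ᵏ` of its mass on `[-2, 2]` inside `[-a, a]`. The tails are bounded by integrating
`1 / x²` and not by the supremum times the length, so that no factor `1 / a` is lost. -/
theorem exists_kernel (a : ℝ) (ha : 0 < a) (ha1 : a ≤ 1) (m k : ℕ) (hk : 1 ≤ k)
    (hm : 10 / a ≤ m) :
    ∃ κ : ℝ[X], κ.natDegree ≤ 4 * m * k ∧ (∀ x, 0 ≤ κ.eval x) ∧
      0 < (∫ x in (-2:ℝ)..2, κ.eval x) ∧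
      (∫ x in (-2:ℝ)..(-a), κ.eval x) + (∫ x in a..2, κ.eval x) ≤
        (1 / 10) ^ k * ∫ x in (-2:ℝ)..2, κ.eval x := by
  have hm10 : (10:ℝ) ≤ m := by
    refine le_trans ?_ hm
    rw [le_div_iff₀ ha]; linarith
  have hM : 10 ≤ m * a := by rwa [div_le_iff₀ ha] at hm
  obtain ⟨F, hd, hlo, hup⟩ := exists_fejer m (by exact_mod_cast (by linarith : (1:ℝ) ≤ m))
  have hc : ∀ c d : ℝ, IntervalIntegrable (fun x => (F ^ (2 * k)).eval x) MeasureTheory.volume c d :=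
    fun c d => (F ^ (2 * k)).continuous.intervalIntegrable _ _
  have hnn : ∀ x, 0 ≤ (F ^ (2 * k)).eval x := fun x => by
    rw [eval_pow, pow_mul']; positivity
  have hm2 : (2:ℝ) / m ≤ 2 := by rw [div_le_iff₀ (by positivity)]; linarith
  have hI : 2 / m * (2 / 5 : ℝ) ^ (2 * k) ≤ ∫ x in (-2:ℝ)..2, (F ^ (2 * k)).eval x := by
    calc 2 / m * (2 / 5 : ℝ) ^ (2 * k) = ∫ x in (0:ℝ)..(2 / m), (2 / 5 : ℝ) ^ (2 * k) := by simp
      _ ≤ ∫ x in (0:ℝ)..(2 / m), (F ^ (2 * k)).eval x := by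
        apply intervalIntegral.integral_mono_on_of_le_Ioo (by positivity) (by simp) (hc _ _)
        intro x hx
        rw [eval_pow]
        exact pow_le_pow_left₀ (by norm_num) (hlo x hx) _
      _ ≤ _ := intervalIntegral.integral_mono_interval (by norm_num) (by positivity) hm2
        (Filter.Eventually.of_forall hnn) (hc _ _)
  -- Only one of the `2 k` Fejér factors keeps its decay `1 / x²`; the others are bounded by their
  -- value at `|x| = a`.
  set D : ℝ := (4 / (m * a) ^ 2) ^ (2 * k - 1) * (4 / m ^ 2) with hD
  have hD0 : 0 ≤ D := by positivity
  have hpt : ∀ x : ℝ, a ≤ |x| → |x| ≤ 2 → (F ^ (2 * k)).eval x ≤ D * x ^ (-2 : ℤ) := by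
    intro x h1 h2
    have hx0 : 0 < |x| := ha.trans_le h1
    have hxx : a ^ 2 ≤ x ^ 2 := by rw [← sq_abs x]; gcongr
    have hx2 : 0 < x ^ 2 := lt_of_lt_of_le (by positivity) hxx
    have h3 := hup x hx0 h2
    calc (F ^ (2 * k)).eval x ≤ |F.eval x| ^ (2 * k) := by
          rw [eval_pow, ← abs_pow]; exact le_abs_self _
      _ ≤ (4 / (m ^ 2 * x ^ 2)) ^ (2 * k) := by gcongr
      _ = (4 / (m ^ 2 * x ^ 2)) ^ (2 * k - 1) * (4 / (m ^ 2 * x ^ 2)) := by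
          rw [← pow_succ]; congr 1; omega
      _ ≤ (4 / (m * a) ^ 2) ^ (2 * k - 1) * (4 / (m ^ 2 * x ^ 2)) := by
          rw [mul_pow]; gcongr
      _ = D * x ^ (-2 : ℤ) := by
          rw [hD, zpow_neg, zpow_ofNat, ← div_div, mul_assoc]; rfl
  have hz : ∫ x in a..2, x ^ (-2 : ℤ) ≤ 1 / a := by
    rw [integral_zpow]
    · have : (0:ℝ) ≤ 1 / 2 := by norm_num
      norm_num
      linarith
    · right
      refine ⟨by norm_num, ?_⟩
      rw [Set.uIcc_of_le (by linarith)]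
      simp only [Set.mem_Icc, not_and]; intro h; linarith
  have hzi : IntervalIntegrable (fun x : ℝ => D * x ^ (-2 : ℤ)) MeasureTheory.volume a 2 := by
    apply ContinuousOn.intervalIntegrable
    rw [Set.uIcc_of_le (by linarith)]
    intro x hx
    exact (continuousAt_const.mul (continuousAt_zpow₀ _ _ (Or.inl (ha.trans_le hx.1).ne'))).continuousWithinAt
  have ht1 : ∫ x in a..2, (F ^ (2 * k)).eval x ≤ D * (1 / a) := by
    calc _ ≤ ∫ x in a..2, D * x ^ (-2 : ℤ) := by
          apply intervalIntegral.integral_mono_on (by linarith) (hc _ _) hzi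
          intro x hx
          have : |x| = x := abs_of_pos (ha.trans_le hx.1)
          exact hpt x (by rw [this]; exact hx.1) (by rw [this]; exact hx.2)
      _ ≤ _ := by rw [intervalIntegral.integral_const_mul]; gcongr
  have ht2 : ∫ x in (-2:ℝ)..(-a), (F ^ (2 * k)).eval x ≤ D * (1 / a) := by
    rw [← intervalIntegral.integral_comp_neg (fun x => (F ^ (2 * k)).eval x)]
    calc _ ≤ ∫ x in a..2, D * x ^ (-2 : ℤ) := by
          apply intervalIntegral.integral_mono_on (by linarith)
            (((F ^ (2 * k)).continuous.comp continuous_neg).intervalIntegrable _ _) hzi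
          intro x hx
          have : |-x| = x := by rw [abs_neg]; exact abs_of_pos (ha.trans_le hx.1)
          have h := hpt (-x) (by rw [this]; exact hx.1) (by rw [this]; exact hx.2)
          rwa [(by decide : Even (-2 : ℤ)).neg_zpow] at h
      _ ≤ _ := by rw [intervalIntegral.integral_const_mul]; gcongr
  have hI0 : (0:ℝ) < 2 / m * (2 / 5 : ℝ) ^ (2 * k) := by positivity
  refine ⟨F ^ (2 * k), ?_, hnn, hI0.trans_le hI, ?_⟩
  · refine natDegree_pow_le.trans ?_
    calc 2 * k * F.natDegree ≤ 2 * k * (2 * m) := by gcongr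
      _ = _ := by ring
  · have hDM : 2 * (D * (1 / a)) ≤ (1 / 10) ^ k * (2 / m * (2 / 5 : ℝ) ^ (2 * k)) := by
      obtain ⟨r, rfl⟩ : ∃ r, k = r + 1 := ⟨k - 1, by omega⟩
      set M : ℝ := m * a with hMdef
      have e1 : 2 * (D * (1 / a)) = (2 / m) * ((4 / M ^ 2) ^ (2 * r + 1) * (4 / M)) := by
        rw [hD, show 2 * (r + 1) - 1 = 2 * r + 1 by omega, hMdef]
        field_simp
      rw [e1, mul_left_comm ((1 / 10 : ℝ) ^ (r + 1))]
      apply mul_le_mul_of_nonneg_left _ (by positivity)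
      have h1 : 4 / M ^ 2 ≤ 1 / 25 := by
        rw [div_le_iff₀ (by positivity)]; nlinarith
      have h2 : 4 / M ≤ 2 / 5 := by
        rw [div_le_iff₀ (by positivity)]; linarith
      calc (4 / M ^ 2) ^ (2 * r + 1) * (4 / M) ≤ (1 / 25) ^ (2 * r + 1) * (2 / 5) := by gcongr
        _ = ((1 / 625) ^ r) * (2 / 125) := by rw [pow_succ, pow_mul]; norm_num; ring
        _ ≤ ((2 / 125) ^ r) * (2 / 125) := by
          apply mul_le_mul_of_nonneg_right _ (by norm_num)
          exact pow_le_pow_left₀ (by norm_num) (by norm_num) _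
        _ = _ := by
          rw [← pow_succ, pow_mul (2 / 5 : ℝ) 2, ← mul_pow]; norm_num
    calc _ ≤ D * (1 / a) + D * (1 / a) := add_le_add ht2 ht1
      _ = 2 * (D * (1 / a)) := by ring
      _ ≤ _ := hDM
      _ ≤ _ := by gcongr

/-! ### Bounded approximation of the exponential -/

/-- A polynomial of degree `O(B k)`, bounded by `1 / 2` on `[-1, 1]`, that equals `α exp (B x)` on
`[-1/2, 0]` up to a one-sided additive error `2 α 10⁻ᵏ`. It is the normalized convolution of
`exp (B min (t, a))`, where `a = 1 / (10 B)`, with the kernel of `exists_kernel`: the truncated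
exponential is bounded by `exp (1 / 10)`, and on windows of radius `a` around a point `x ≤ 0` it is a
genuine exponential, hence an eigenfunction of convolution. -/
theorem exists_exp_approx (B : ℝ) (hB : 1 ≤ B) (k : ℕ) (hk : 1 ≤ k) :
    ∃ P : ℝ[X], (P.natDegree : ℝ) ≤ 404 * B * k ∧
      (∀ x ∈ Set.Icc (-1:ℝ) 1, |P.eval x| ≤ 1 / 2) ∧
      ∃ α : ℝ, 1 / 6 ≤ α ∧ ∀ x ∈ Set.Icc (-(1/2):ℝ) 0,
        α * Real.exp (B * x) ≤ P.eval x ∧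
        P.eval x ≤ α * (Real.exp (B * x) + 2 * (1 / 10) ^ k) := by
  set a : ℝ := 1 / (10 * B) with ha
  have ha0 : 0 < a := by positivity
  have ha1 : a ≤ 1 / 10 := by
    rw [ha, div_le_div_iff₀ (by positivity) (by norm_num)]; linarith
  have hBa : B * a = 1 / 10 := by rw [ha]; field_simp
  obtain ⟨κ, hdeg, hnn, hI, hT⟩ := exists_kernel a ha0 (by linarith) ⌈100 * B⌉₊ k hk (by
    refine le_trans (le_of_eq ?_) (Nat.le_ceil _)
    rw [ha]; field_simp; norm_num)
  set I := ∫ x in (-2:ℝ)..2, κ.eval x with hIdef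
  set T₁ := ∫ x in (-2:ℝ)..(-a), κ.eval x with hT₁
  set T₂ := ∫ x in a..2, κ.eval x with hT₂
  set ε : ℝ := (1 / 10) ^ k with hε
  have hε0 : 0 < ε := by positivity
  have hε1 : ε ≤ 1 / 10 := pow_le_of_le_one (by norm_num) (by norm_num) (by omega)
  set f : ℝ → ℝ := fun t => Real.exp (B * min t a) with hfdef
  have hf : Continuous f := by fun_prop
  set E := Real.exp (1 / 10) with hE
  have hE0 : 0 < E := Real.exp_pos _
  have hE9 : 9 / 10 ≤ Real.exp (-(1 / 10)) := by
    have := Real.add_one_le_exp (-(1 / 10) : ℝ); linarith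
  have hE1 : E ≤ 10 / 9 := by
    have h : E * Real.exp (-(1 / 10)) = 1 := by rw [hE, ← Real.exp_add]; simp
    nlinarith
  have hfE : ∀ t, f t ≤ E := fun t => by
    rw [hE, ← hBa]
    exact Real.exp_le_exp.2 (mul_le_mul_of_nonneg_left (min_le_right _ _) (by linarith))
  have hf0 : ∀ t, 0 ≤ f t := fun t => (Real.exp_pos _).le
  have hκi : ∀ c d : ℝ, IntervalIntegrable (fun x => κ.eval x) MeasureTheory.volume c d :=
    fun c d => κ.continuous.intervalIntegrable _ _
  have hgi : ∀ x c d : ℝ, IntervalIntegrable (fun s => f (x - s) * κ.eval s)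
      MeasureTheory.volume c d := fun x c d =>
    ((hf.comp (continuous_const.sub continuous_id)).mul κ.continuous).intervalIntegrable _ _
  have hmono : ∀ c c' d' d : ℝ, c ≤ c' → c' ≤ d' → d' ≤ d →
      ∫ s in c'..d', κ.eval s ≤ ∫ s in c..d, κ.eval s := fun c c' d' d h1 h2 h3 =>
    intervalIntegral.integral_mono_interval h1 h2 h3 (Filter.Eventually.of_forall hnn) (hκi _ _)
  -- Any window of the convolution integral costs at most `E` times the kernel mass there.
  have hwin : ∀ x c d : ℝ, c ≤ d → 0 ≤ ∫ s in c..d, f (x - s) * κ.eval s ∧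
      ∫ s in c..d, f (x - s) * κ.eval s ≤ E * ∫ s in c..d, κ.eval s := by
    intro x c d hcd
    refine ⟨intervalIntegral.integral_nonneg hcd fun s _ => mul_nonneg (hf0 _) (hnn _), ?_⟩
    rw [← intervalIntegral.integral_const_mul]
    exact intervalIntegral.integral_mono_on hcd (hgi _ _ _) ((hκi _ _).const_mul _)
      fun s _ => mul_le_mul_of_nonneg_right (hfE _) (hnn _)
  obtain ⟨Q, hQd, hQ⟩ := exists_conv f hf κ
  have hQ' : ∀ x, Q.eval x = ∫ s in (x - 1)..(x + 1), f (x - s) * κ.eval s := by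
    intro x
    rw [hQ]
    have h := intervalIntegral.integral_comp_sub_left
      (a := -1) (b := 1) (fun s => f (x - s) * κ.eval s) x
    simp only [sub_sub_cancel, sub_neg_eq_add] at h
    exact h
  set J := ∫ s in (-a)..a, Real.exp (-(B * s)) * κ.eval s with hJ
  have hsplit : I = T₁ + (∫ s in (-a)..a, κ.eval s) + T₂ := by
    rw [hIdef, hT₁, hT₂, intervalIntegral.integral_add_adjacent_intervals (hκi _ _) (hκi _ _),
      intervalIntegral.integral_add_adjacent_intervals (hκi _ _) (hκi _ _)]
  have hJlow : 9 / 10 * (9 / 10 * I) ≤ J := by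
    have h1 : 9 / 10 * ∫ s in (-a)..a, κ.eval s ≤ J := by
      rw [← intervalIntegral.integral_const_mul]
      refine intervalIntegral.integral_mono_on (by linarith) ((hκi _ _).const_mul _)
        (Continuous.intervalIntegrable (by fun_prop) _ _) fun s hs => ?_
      refine mul_le_mul_of_nonneg_right (hE9.trans (Real.exp_le_exp.2 ?_)) (hnn _)
      nlinarith [hs.2]
    nlinarith
  refine ⟨C (1 / (2 * E * I)) * Q, ?_, ?_, J / (2 * E * I), ?_, ?_⟩
  · have h1 : (C (1 / (2 * E * I)) * Q).natDegree ≤ 4 * ⌈100 * B⌉₊ * k :=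
      (natDegree_C_mul_le _ _).trans (hQd.trans hdeg)
    have h2 : (⌈100 * B⌉₊ : ℝ) ≤ 101 * B := by
      have := Nat.ceil_lt_add_one (show 0 ≤ 100 * B by linarith); linarith
    calc _ ≤ ((4 * ⌈100 * B⌉₊ * k : ℕ) : ℝ) := by exact_mod_cast h1
      _ = 4 * (⌈100 * B⌉₊ : ℝ) * k := by push_cast; ring
      _ ≤ 4 * (101 * B) * k := by gcongr
      _ = _ := by ring
  · intro x hx
    have h := hwin x (x - 1) (x + 1) (by linarith)
    have h2 := hmono (-2) (x - 1) (x + 1) 2 (by linarith [hx.1]) (by linarith) (by linarith [hx.2])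
    rw [eval_mul, eval_C, hQ', abs_of_nonneg (mul_nonneg (by positivity) h.1), one_div_mul_eq_div,
      div_le_iff₀ (by positivity)]
    nlinarith
  · rw [le_div_iff₀ (by positivity)]
    nlinarith
  · intro x hx
    -- On `|s| ≤ a` the truncation is inactive because `x - s ≤ a`.
    have hmid : ∫ s in (-a)..a, f (x - s) * κ.eval s = Real.exp (B * x) * J := by
      rw [hJ, ← intervalIntegral.integral_const_mul]
      refine intervalIntegral.integral_congr fun s hs => ?_
      rw [Set.uIcc_of_le (by linarith)] at hs
      simp only [hfdef]
      rw [min_eq_left (by linarith [hx.2, hs.1]), ← mul_assoc, ← Real.exp_add]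
      ring_nf
    have h1 := hwin x (x - 1) (-a) (by linarith [hx.2])
    have h2 := hwin x a (x + 1) (by linarith [hx.1])
    have h3 := hmono (-2) (x - 1) (-a) (-a) (by linarith [hx.1]) (by linarith [hx.2]) le_rfl
    have h4 := hmono a a (x + 1) 2 le_rfl (by linarith [hx.1]) (by linarith [hx.2])
    have hQx : Q.eval x = (∫ s in (x - 1)..(-a), f (x - s) * κ.eval s) + Real.exp (B * x) * J +
        ∫ s in a..(x + 1), f (x - s) * κ.eval s := by
      rw [hQ', ← hmid,
        intervalIntegral.integral_add_adjacent_intervals (hgi _ _ _) (hgi _ _ _),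
        intervalIntegral.integral_add_adjacent_intervals (hgi _ _ _) (hgi _ _ _)]
    have hQup : Q.eval x ≤ J * (Real.exp (B * x) + 2 * ε) := by
      have h5 : E * (T₁ + T₂) ≤ 10 / 9 * (ε * I) := mul_le_mul hE1 hT
        (add_nonneg (intervalIntegral.integral_nonneg (by linarith) fun s _ => hnn s)
          (intervalIntegral.integral_nonneg (by linarith) fun s _ => hnn s)) (by norm_num)
      have h6 : 10 / 9 * (ε * I) ≤ J * (2 * ε) := by nlinarith [mul_pos hε0 hI]
      nlinarith
    rw [eval_mul, eval_C, one_div_mul_eq_div]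
    constructor
    · rw [div_mul_eq_mul_div]
      gcongr
      linarith
    · rw [div_mul_eq_mul_div]
      gcongr

end

/-! ### Normalized vectors and the final estimate -/

/-- A nonnegative vector and an entrywise perturbation from above by at most `η` have
`ℓ₁`-normalizations at distance at most `2 n η / ‖z‖₁`. -/
theorem normalize_le {n : ℕ} (y z : Fin n → ℝ) (η : ℝ) (hz : ∀ j, 0 ≤ z j) (hzy : ∀ j, z j ≤ y j)
    (hy : ∀ j, y j ≤ z j + η) (Z : 0 < ∑ j, z j) :
    ∑ j, |y j / (∑ i, y i) - z j / (∑ i, z i)| ≤ 2 * (n * η) / ∑ j, z j := by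
  set Y := ∑ j, y j with hY
  set S := ∑ j, z j with hS
  have hSY : S ≤ Y := Finset.sum_le_sum fun j _ => hzy j
  have hYS : Y ≤ S + n * η := by
    calc Y ≤ ∑ j, (z j + η) := Finset.sum_le_sum fun j _ => hy j
      _ = S + n * η := by rw [Finset.sum_add_distrib]; simp [hS]
  have hY0 : 0 < Y := Z.trans_le hSY
  have key : ∀ j, |y j / Y - z j / S| ≤ (y j - z j) / S + y j * (1 / S - 1 / Y) := by
    intro j
    have e : y j / Y - z j / S = (y j - z j) / S - y j * (1 / S - 1 / Y) := by ring
    rw [e]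
    have h1 : 0 ≤ (y j - z j) / S := div_nonneg (sub_nonneg.2 (hzy j)) Z.le
    have h2 : 0 ≤ y j * (1 / S - 1 / Y) :=
      mul_nonneg ((hz j).trans (hzy j)) (sub_nonneg.2 (one_div_le_one_div_of_le Z hSY))
    rw [abs_le]; constructor <;> linarith
  calc _ ≤ ∑ j, ((y j - z j) / S + y j * (1 / S - 1 / Y)) := Finset.sum_le_sum fun j _ => key j
    _ = (Y - S) / S + Y * (1 / S - 1 / Y) := by
      rw [Finset.sum_add_distrib, ← Finset.sum_div, ← Finset.sum_mul, Finset.sum_sub_distrib]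
    _ = 2 * (Y - S) / S := by field_simp; ring
    _ ≤ _ := by gcongr; linarith

/-- There is an absolute constant `c > 0` such that for every `B ≥ 1`,
`δ ∈ (0, 1/2]`, `c₀ ≥ 0`, `ℓ ∈ (0, 1]`, every `v ∈ ℝⁿ` with `‖v‖_∞ ≤ B` and
`-c₀ ≤ max_j v_j ≤ 0`, and every `q` with `q_j ∈ [ℓ, 1]`, there is a polynomial `P` of
degree at most `c B (c₀ + log(n/(ℓδ)))`, bounded by `1/2` on `[-1,1]`, such that with
`w_j = P(v_j/(2B))² q_j` and `z_j = exp(2B · v_j/(2B)) q_j` one has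
`‖w/‖w‖₁ - z/‖z‖₁‖₁ ≤ δ` and `‖w‖₁ ≥ ((1-δ)/36)‖z‖₁`. -/
theorem stmt9 : ∃ c : ℝ, 0 < c ∧
    ∀ (n : ℕ) (B δ c₀ ℓ : ℝ) (v q : Fin n → ℝ),
      1 ≤ B → δ ∈ Set.Ioc (0:ℝ) (1/2) → 0 ≤ c₀ → ℓ ∈ Set.Ioc (0:ℝ) 1 →
      (∀ j, |v j| ≤ B) → (∃ j, -c₀ ≤ v j) → (∀ j, v j ≤ 0) →
      (∀ j, q j ∈ Set.Icc ℓ 1) →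
      ∃ P : Polynomial ℝ,
        (P.natDegree : ℝ) ≤ c * B * (c₀ + Real.log ((n : ℝ) / (ℓ * δ))) ∧
        (∀ x ∈ Set.Icc (-1:ℝ) 1, |P.eval x| ≤ 1/2) ∧
        ∀ w z : Fin n → ℝ,
          (∀ j, w j = (P.eval (v j / (2 * B)))^2 * q j) →
          (∀ j, z j = Real.exp (2 * B * (v j / (2 * B))) * q j) →
          (∑ j, |w j / (∑ j', |w j'|) - z j / (∑ j', |z j'|)|) ≤ δ ∧
          (1 - δ) / 36 * (∑ j, |z j|) ≤ ∑ j, |w j| := by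
  refine ⟨404 * 9, by norm_num, ?_⟩
  rintro n B δ c₀ ℓ v q hB ⟨hδ0, hδ⟩ hc₀ ⟨hℓ0, hℓ⟩ hvB ⟨j₀, hj₀⟩ hv0 hq
  have hn : (1:ℝ) ≤ n := by exact_mod_cast j₀.pos
  set R : ℝ := n / (ℓ * δ) with hR
  have hR2 : 2 ≤ R := by
    rw [hR, le_div_iff₀ (by positivity)]
    nlinarith
  set L := c₀ + Real.log R with hL
  have hL2 : 0.69 ≤ L := by
    have h1 := Real.log_le_log (by norm_num) hR2
    have h2 := Real.log_two_gt_d9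
    linarith
  set k := ⌈L + 3⌉₊ with hkdef
  have hkL : L + 3 ≤ k := Nat.le_ceil _
  have hkU : (k:ℝ) ≤ 9 * L := by
    have := Nat.ceil_lt_add_one (show 0 ≤ L + 3 by linarith)
    rw [hkdef]; linarith
  have hk1 : 1 ≤ k := by
    have : (1:ℝ) ≤ k := by linarith
    exact_mod_cast this
  set ε : ℝ := (1 / 10) ^ k with hε
  have hε0 : 0 < ε := by positivity
  have hε1 : ε ≤ 1 / 10 := pow_le_of_le_one (by norm_num) (by norm_num) (by omega)
  -- `10⁻ᵏ ≤ e⁻ᵏ ≤ e⁻³ e⁻ᴸ`, and `e⁻³ ≤ 1 / 10` absorbs the numerical factor.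
  have hεL : 10 * n * ε ≤ δ * (Real.exp (-c₀) * ℓ) := by
    have he : Real.exp (-1) ≥ 1 / 10 := by
      have h3 := Real.exp_one_lt_d9
      rw [Real.exp_neg, ge_iff_le, one_div, inv_le_inv₀ (by norm_num) (Real.exp_pos _)]
      linarith
    have h10 : Real.exp (-3) ≤ 1 / 10 := by
      have h3 := Real.exp_one_gt_d9
      have h4 : Real.exp 3 = Real.exp 1 ^ 3 := by rw [← Real.exp_nat_mul]; norm_num
      have h5 : (10:ℝ) ≤ Real.exp 3 := by
        rw [h4]
        calc (10:ℝ) ≤ 2.7 ^ 3 := by norm_num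
          _ ≤ _ := by gcongr; linarith
      rw [Real.exp_neg, one_div]
      exact inv_anti₀ (by norm_num) h5
    have h1 : ε ≤ Real.exp (-L) * (1 / 10) := by
      calc ε ≤ Real.exp (-1) ^ k := pow_le_pow_left₀ (by norm_num) he _
        _ = Real.exp (-k) := by rw [← Real.exp_nat_mul]; ring_nf
        _ ≤ Real.exp (-L + -3) := Real.exp_le_exp.2 (by linarith)
        _ = Real.exp (-L) * Real.exp (-3) := Real.exp_add _ _
        _ ≤ _ := by gcongr
    have h2 : Real.exp (-L) = Real.exp (-c₀) * (ℓ * δ / n) := by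
      rw [hL, neg_add, Real.exp_add, Real.exp_neg (Real.log R), Real.exp_log (by linarith), hR,
        inv_div]
    calc 10 * n * ε ≤ 10 * n * (Real.exp (-c₀) * (ℓ * δ / n) * (1 / 10)) := by
          rw [← h2]; gcongr
      _ = _ := by field_simp
  obtain ⟨P, hPd, hP1, α, hα, hP⟩ := exists_exp_approx B hB k hk1
  refine ⟨P, ?_, hP1, ?_⟩
  · calc _ ≤ 404 * B * k := hPd
      _ ≤ 404 * B * (9 * L) := by gcongr
      _ = _ := by ring
  intro w z hw hz
  have hα0 : 0 < α := by linarith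
  have hz' : ∀ j, z j = Real.exp (B * (v j / (2 * B))) ^ 2 * q j := fun j => by
    rw [hz, ← Real.exp_nat_mul]; push_cast; ring_nf
  have hzv : ∀ j, z j = Real.exp (v j) * q j := fun j => by
    rw [hz]; congr 2; field_simp
  have hq0 : ∀ j, 0 ≤ q j := fun j => hℓ0.le.trans (hq j).1
  have hz0 : ∀ j, 0 ≤ z j := fun j => by rw [hzv]; exact mul_nonneg (Real.exp_pos _).le (hq0 j)
  have hw0 : ∀ j, 0 ≤ w j := fun j => by rw [hw]; exact mul_nonneg (sq_nonneg _) (hq0 j)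
  have hx : ∀ j, v j / (2 * B) ∈ Set.Icc (-(1/2):ℝ) 0 := fun j => by
    constructor
    · rw [le_div_iff₀ (by positivity)]; linarith [(abs_le.1 (hvB j)).1]
    · exact div_nonpos_of_nonpos_of_nonneg (hv0 j) (by positivity)
  -- Undoing the scaling by `α²` does not change the normalized vector.
  set y : Fin n → ℝ := fun j => w j / α ^ 2 with hy
  have hzy : ∀ j, z j ≤ y j := fun j => by
    have h := (hP _ (hx j)).1
    simp only [hy]
    rw [le_div_iff₀ (by positivity), hz', hw, mul_right_comm, ← mul_pow, mul_comm _ α]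
    gcongr
    exact hq0 j
  have hyz : ∀ j, y j ≤ z j + 5 * ε := fun j => by
    have h := (hP _ (hx j)).2
    have hP0 : 0 ≤ P.eval (v j / (2 * B)) := le_trans (by positivity) (hP _ (hx j)).1
    set e := Real.exp (B * (v j / (2 * B))) with he
    have he0 : 0 < e := Real.exp_pos _
    have he1 : e ≤ 1 := Real.exp_le_one_iff.2 (mul_nonpos_of_nonneg_of_nonpos (by linarith) (hx j).2)
    simp only [hy]
    rw [div_le_iff₀ (by positivity), hz', hw, ← he]
    have h1 : P.eval (v j / (2 * B)) ^ 2 ≤ (e + 2 * ε) ^ 2 * α ^ 2 := by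
      rw [← mul_pow, mul_comm _ α]; gcongr
    have h2 : (e + 2 * ε) ^ 2 ≤ e ^ 2 + 5 * ε := by nlinarith
    calc _ ≤ (e ^ 2 + 5 * ε) * α ^ 2 * q j := by
          apply mul_le_mul_of_nonneg_right _ (hq0 j)
          exact h1.trans (by gcongr)
      _ = (e ^ 2 * q j + 5 * ε * q j) * α ^ 2 := by ring
      _ ≤ (e ^ 2 * q j + 5 * ε * 1) * α ^ 2 := by gcongr; exact (hq j).2
      _ = _ := by ring
  have hZ : Real.exp (-c₀) * ℓ ≤ ∑ j, z j := by
    refine le_trans ?_ (Finset.single_le_sum (fun j _ => hz0 j) (Finset.mem_univ j₀))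
    rw [hzv]
    gcongr
    exact (hq j₀).1
  have hZ0 : 0 < ∑ j, z j := lt_of_lt_of_le (by positivity) hZ
  simp only [abs_of_nonneg (hw0 _), abs_of_nonneg (hz0 _)]
  have hysum : ∑ j, y j = (∑ j, w j) / α ^ 2 := by rw [hy, Finset.sum_div]
  constructor
  · have h := normalize_le y z (5 * ε) hz0 hzy hyz hZ0
    have hyw : ∀ j, y j / (∑ i, y i) = w j / ∑ i, w i := fun j => by
      rw [hysum]
      exact div_div_div_cancel_right₀ (by positivity) _ _
    simp only [hyw] at h
    refine h.trans ?_
    rw [div_le_iff₀ hZ0]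
    calc _ = 10 * n * ε := by ring
      _ ≤ _ := hεL
      _ ≤ _ := by gcongr
  · have h1 : ∑ j, z j ≤ (∑ j, w j) / α ^ 2 := hysum ▸ Finset.sum_le_sum fun j _ => hzy j
    rw [le_div_iff₀ (by positivity)] at h1
    have h2 : (1 - δ) / 36 ≤ α ^ 2 := by nlinarith
    calc _ ≤ α ^ 2 * ∑ j, z j := by gcongr
      _ ≤ _ := by linarith
end
end

section
/- Let A ∈ ℝ^{m×n} with ‖A‖_max ≤ 1, η > 0, T ≥ 1, and let {i_t}_{t=0}^{T−1} ⊂ [m], {j_t}_{t=0}^{T−1} ⊂ [n] be arbitrary index sequences. For w = (u,v) ∈ Δ^m × Δ^n define g(w) := (−Av, Aᵀu), and set g̃_t := (−A_{:j_t}, A_{i_t:}). Let u_0, v_0, ũ_0, ṽ_0 be uniform; for each t define the iterates [u_{t+1}]_i ∝ [u_t]_i exp(η A_{i j_t}), [v_{t+1}]_j ∝ [v_t]_j exp(−η A_{i_t j}), and the ghost iterates [ũ_{t+1}]_i ∝ [ũ_t]_i exp(−η(−[Av_t]_i + A_{i j_t})), [ṽ_{t+1}]_j ∝ [ṽ_t]_j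 exp(−η([Aᵀu_t]_j − A_{i_t j})). Write w_t := (u_t, v_t), w̃_t := (ũ_t, ṽ_t), g_t := g(w_t). Then max_{w ∈ Δ^m×Δ^n} (1/T) Σ_{t=0}^{T−1} ⟨g_t, w_t − w⟩ ≤ (2/(ηT))·log(mn) + 5η + (1/T) Σ_{t=0}^{T−1} ⟨g_t − g̃_t, w_t − w̃_t⟩. -/
/-!
Multiplicative weights with step `η` on losses bounded by `G` has regret at most
`log k / η + T η G² / 2` against every point of the simplex (`mw_regret`): along the iterates,
`log (x_t i)` increases by `-η ℓ_t i - log Z_t`, Hoeffding's lemma (`hoeffding_sum`) bounds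
`log Z_t` by `-η ⟨ℓ_t, x_t⟩ + η² G² / 2`, and `log (x_T i) ≤ 0`.

The theorem follows from the splitting
`⟨g_t, w_t - w⟩ = ⟨g̃_t, w_t - w⟩ + ⟨g_t - g̃_t, w̃_t - w⟩ + ⟨g_t - g̃_t, w_t - w̃_t⟩`.
The first term is the regret of the two actual iterates (`G = 1`, cost `η / 2` each), the second
that of the two ghost iterates (`G = 2`, cost `2 η` each); together they cost
`2 log (m n) / η + 5 η T`.
-/


noncomputable section

/-- membership in the probability simplex Δ^k -/
def IsSimplex {k : ℕ} (u : Fin k → ℝ) : Prop :=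
  (∀ i, 0 ≤ u i) ∧ ∑ i, u i = 1

open MeasureTheory ProbabilityTheory in
/-- Hoeffding's lemma for a finitely supported distribution, without centering. It is obtained
from the measure-theoretic version applied to the probability measure with weights `p`. -/
lemma hoeffding_sum {k : ℕ} {p x : Fin k → ℝ} (hp : IsSimplex p) {G : ℝ} (hx : ∀ i, |x i| ≤ G)
    (η : ℝ) :
    ∑ i, p i * Real.exp (-(η * x i)) ≤
      Real.exp (-(η * ∑ i, p i * x i) + η ^ 2 * G ^ 2 / 2) := by
  have hsum : ∑ i, ENNReal.ofReal (p i) = 1 := by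
    rw [← ENNReal.ofReal_sum_of_nonneg fun i _ => hp.1 i, hp.2, ENNReal.ofReal_one]
  set P : PMF (Fin k) := PMF.ofFintype (fun i => ENNReal.ofReal (p i)) hsum
  have hint (f : Fin k → ℝ) : ∫ i, f i ∂P.toMeasure = ∑ i, p i * f i := by
    rw [PMF.integral_eq_sum]
    refine Finset.sum_congr rfl fun i _ => ?_
    rw [PMF.ofFintype_apply, ENNReal.toReal_ofReal (hp.1 i), smul_eq_mul]
  have hsub := hasSubgaussianMGF_of_mem_Icc (μ := P.toMeasure) (X := x) (a := -G) (b := G)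
    (measurable_of_finite x).aemeasurable (Filter.Eventually.of_forall fun i => abs_le.1 (hx i))
  have hG : ((‖G - -G‖₊ / 2) ^ 2 : NNReal) = G ^ 2 := by
    push_cast
    rw [Real.norm_eq_abs, div_pow, sq_abs]
    ring
  have h := hsub.mgf_le (-η)
  rw [mgf, hint, hint] at h
  rw [hG] at h
  set μ := ∑ i, p i * x i
  calc ∑ i, p i * Real.exp (-(η * x i))
      = Real.exp (-(η * μ)) * ∑ i, p i * Real.exp (-η * (x i - μ)) := by
        rw [Finset.mul_sum]
        refine Finset.sum_congr rfl fun i _ => ?_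
        rw [mul_left_comm, ← Real.exp_add]
        ring_nf
    _ ≤ Real.exp (-(η * μ)) * Real.exp (G ^ 2 * (-η) ^ 2 / 2) := by gcongr
    _ = _ := by rw [← Real.exp_add]; ring_nf

section MultiplicativeWeights

variable {k : ℕ} {x ℓ : ℕ → Fin k → ℝ} {η : ℝ}

/-- The multiplicative-weights iterates stay in the interior of the simplex. -/
lemma mw_pos_simplex (hk : 0 < k) (h0 : ∀ i, x 0 i = 1 / (k : ℝ))
    (hrec : ∀ t i, x (t + 1) i =
      x t i * Real.exp (-(η * ℓ t i)) / ∑ j, x t j * Real.exp (-(η * ℓ t j))) (t : ℕ) :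
    (∀ i, 0 < x t i) ∧ IsSimplex (x t) := by
  have : Nonempty (Fin k) := ⟨⟨0, hk⟩⟩
  have hk' : (0 : ℝ) < k := by exact_mod_cast hk
  suffices h : (∀ i, 0 < x t i) ∧ ∑ i, x t i = 1 from ⟨h.1, fun i => (h.1 i).le, h.2⟩
  induction t with
  | zero =>
    refine ⟨fun i => by rw [h0]; positivity, ?_⟩
    simp only [h0, Finset.sum_const, Finset.card_univ, Fintype.card_fin, nsmul_eq_mul]
    field_simp
  | succ t ih =>
    have hpos (i : Fin k) : 0 < x t i * Real.exp (-(η * ℓ t i)) :=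
      mul_pos (ih.1 i) (Real.exp_pos _)
    have hZ : 0 < ∑ j, x t j * Real.exp (-(η * ℓ t j)) :=
      Finset.sum_pos (fun i _ => hpos i) Finset.univ_nonempty
    refine ⟨fun i => by rw [hrec]; exact div_pos (hpos i) hZ, ?_⟩
    simp only [hrec t]
    rw [← Finset.sum_div, div_self hZ.ne']

/-- Regret bound for multiplicative weights with losses in `[-G, G]`, valid for every step size
`η > 0`. -/
lemma mw_regret (hk : 0 < k) (hη : 0 < η) {G : ℝ} (hℓ : ∀ t i, |ℓ t i| ≤ G)
    (h0 : ∀ i, x 0 i = 1 / (k : ℝ))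
    (hrec : ∀ t i, x (t + 1) i =
      x t i * Real.exp (-(η * ℓ t i)) / ∑ j, x t j * Real.exp (-(η * ℓ t j)))
    {z : Fin k → ℝ} (hz : IsSimplex z) (T : ℕ) :
    ∑ t ∈ Finset.range T, ∑ i, ℓ t i * (x t i - z i) ≤
      Real.log k / η + T * (η * G ^ 2 / 2) := by
  have : Nonempty (Fin k) := ⟨⟨0, hk⟩⟩
  have hx := mw_pos_simplex hk h0 hrec
  have hstep (t : ℕ) (i : Fin k) : η * (∑ j, x t j * ℓ t j - ℓ t i) ≤
      Real.log (x (t + 1) i) - Real.log (x t i) + η ^ 2 * G ^ 2 / 2 := by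
    have hZ : 0 < ∑ j, x t j * Real.exp (-(η * ℓ t j)) :=
      Finset.sum_pos (fun j _ => mul_pos ((hx t).1 j) (Real.exp_pos _)) Finset.univ_nonempty
    have hlog := (Real.log_le_iff_le_exp hZ).2 (hoeffding_sum (hx t).2 (hℓ t) η)
    rw [hrec, Real.log_div (mul_pos ((hx t).1 i) (Real.exp_pos _)).ne' hZ.ne',
      Real.log_mul ((hx t).1 i).ne' (Real.exp_pos _).ne', Real.log_exp]
    linarith
  -- The bound against a single vertex of the simplex, by telescoping.
  have hvertex (i : Fin k) : ∑ t ∈ Finset.range T, (∑ j, x t j * ℓ t j - ℓ t i) ≤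
      Real.log k / η + T * (η * G ^ 2 / 2) := by
    have hT := Finset.sum_le_sum fun t (_ : t ∈ Finset.range T) => hstep t i
    rw [← Finset.mul_sum, Finset.sum_add_distrib,
      Finset.sum_range_sub (fun t => Real.log (x t i)), Finset.sum_const, Finset.card_range,
      nsmul_eq_mul, h0, one_div, Real.log_inv] at hT
    have hle : x T i ≤ 1 := by
      rw [← (hx T).2.2]
      exact Finset.single_le_sum (fun j _ => (hx T).2.1 j) (Finset.mem_univ i)
    have hlog : Real.log (x T i) ≤ 0 := Real.log_nonpos ((hx T).2.1 i) hle
    refine le_of_mul_le_mul_left ?_ hη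
    rw [mul_add, mul_div_cancel₀ _ hη.ne']
    linarith
  calc ∑ t ∈ Finset.range T, ∑ i, ℓ t i * (x t i - z i)
      = ∑ i, z i * ∑ t ∈ Finset.range T, (∑ j, x t j * ℓ t j - ℓ t i) := by
        simp only [Finset.mul_sum]
        rw [Finset.sum_comm (s := Finset.univ)]
        refine Finset.sum_congr rfl fun t _ => ?_
        simp only [mul_sub, Finset.sum_sub_distrib]
        rw [← Finset.sum_mul, hz.2, one_mul]
        simp only [mul_comm]
    _ ≤ ∑ i, z i * (Real.log k / η + T * (η * G ^ 2 / 2)) :=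
        Finset.sum_le_sum fun i _ => mul_le_mul_of_nonneg_left (hvertex i) (hz.1 i)
    _ = _ := by rw [← Finset.sum_mul, hz.2, one_mul]

end MultiplicativeWeights

lemma abs_sum_mul_le_one {k : ℕ} {a p : Fin k → ℝ} (ha : ∀ i, |a i| ≤ 1) (hp : IsSimplex p) :
    |∑ i, a i * p i| ≤ 1 := by
  calc |∑ i, a i * p i| ≤ ∑ i, |a i * p i| := Finset.abs_sum_le_sum_abs _ _
    _ ≤ ∑ i, p i := Finset.sum_le_sum fun i _ => by
        rw [abs_mul, abs_of_nonneg (hp.1 i)]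
        exact mul_le_of_le_one_left (hp.1 i) (ha i)
    _ = 1 := hp.2

/-- Ghost-iterate regret bound: with the multiplicative-weights iterates
`(u_t, v_t)` (gradients `g̃_t = (-A_{:j_t}, A_{i_t:})`) and the ghost iterates
`(ũ_t, ṽ_t)` (gradients `g_t - g̃_t`), for every `w = (u, v) ∈ Δ^m × Δ^n`,
`(1/T) Σ_t ⟨g_t, w_t - w⟩ ≤ (2/(ηT)) log(mn) + 5η + (1/T) Σ_t ⟨g_t - g̃_t, w_t - w̃_t⟩`. -/
theorem stmt13 {m n : ℕ} (hm : 0 < m) (hn : 0 < n)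
    (A : Matrix (Fin m) (Fin n) ℝ) (hA : ∀ i j, |A i j| ≤ 1)
    (η : ℝ) (hη : 0 < η) (T : ℕ) (hT : 1 ≤ T)
    (iseq : ℕ → Fin m) (jseq : ℕ → Fin n)
    (u utilde : ℕ → Fin m → ℝ) (v vtilde : ℕ → Fin n → ℝ)
    (hu0 : ∀ i, u 0 i = 1 / (m : ℝ)) (hv0 : ∀ j, v 0 j = 1 / (n : ℝ))
    (hutilde0 : ∀ i, utilde 0 i = 1 / (m : ℝ)) (hvtilde0 : ∀ j, vtilde 0 j = 1 / (n : ℝ))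
    (hurec : ∀ t i, u (t + 1) i =
      u t i * Real.exp (η * A i (jseq t)) / ∑ k, u t k * Real.exp (η * A k (jseq t)))
    (hvrec : ∀ t j, v (t + 1) j =
      v t j * Real.exp (-(η * A (iseq t) j)) / ∑ k, v t k * Real.exp (-(η * A (iseq t) k)))
    (hutilderec : ∀ t i, utilde (t + 1) i =
      utilde t i * Real.exp (-(η * (-(∑ j, A i j * v t j) + A i (jseq t)))) /
        ∑ k, utilde t k * Real.exp (-(η * (-(∑ j, A k j * v t j) + A k (jseq t)))))
    (hvtilderec : ∀ t j, vtilde (t + 1) j =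
      vtilde t j * Real.exp (-(η * ((∑ i, A i j * u t i) - A (iseq t) j))) /
        ∑ k, vtilde t k * Real.exp (-(η * ((∑ i, A i k * u t i) - A (iseq t) k)))) :
    ∀ (uu : Fin m → ℝ) (vv : Fin n → ℝ), IsSimplex uu → IsSimplex vv →
      (1 / (T : ℝ)) * ∑ t ∈ Finset.range T,
          ((∑ i, -(∑ j, A i j * v t j) * (u t i - uu i)) +
            ∑ j, (∑ i, A i j * u t i) * (v t j - vv j))
        ≤ 2 / (η * T) * Real.log ((m : ℝ) * n) + 5 * η +
          (1 / (T : ℝ)) * ∑ t ∈ Finset.range T,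
            ((∑ i, (-(∑ j, A i j * v t j) - -A i (jseq t)) * (u t i - utilde t i)) +
              ∑ j, ((∑ i, A i j * u t i) - A (iseq t) j) * (v t j - vtilde t j)) := by
  intro uu vv huu hvv
  have hurec' : ∀ t i, u (t + 1) i = u t i * Real.exp (-(η * -A i (jseq t))) /
      ∑ k, u t k * Real.exp (-(η * -A k (jseq t))) := by
    simpa only [mul_neg, neg_neg] using hurec
  have hu (t : ℕ) : IsSimplex (u t) :=
    (mw_pos_simplex (ℓ := fun t i => -A i (jseq t)) hm hu0 hurec' t).2
  have hv (t : ℕ) : IsSimplex (v t) :=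
    (mw_pos_simplex (ℓ := fun t j => A (iseq t) j) hn hv0 hvrec t).2
  have hru := mw_regret (ℓ := fun t i => -A i (jseq t)) (G := 1) hm hη
    (fun t i => by rw [abs_neg]; exact hA _ _) hu0 hurec' huu T
  have hrv := mw_regret (ℓ := fun t j => A (iseq t) j) (G := 1) hn hη
    (fun t j => hA _ _) hv0 hvrec hvv T
  have hrgu := mw_regret (ℓ := fun t i => -(∑ j, A i j * v t j) + A i (jseq t)) (G := 2) hm hη
    (fun t i => by
      have h1 := abs_le.1 (abs_sum_mul_le_one (hA i) (hv t))
      have h2 := abs_le.1 (hA i (jseq t))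
      exact abs_le.2 ⟨by linarith, by linarith⟩) hutilde0 hutilderec huu T
  have hrgv := mw_regret (ℓ := fun t j => (∑ i, A i j * u t i) - A (iseq t) j) (G := 2) hn hη
    (fun t j => by
      have h1 := abs_le.1 (abs_sum_mul_le_one (fun i => hA i j) (hu t))
      have h2 := abs_le.1 (hA (iseq t) j)
      exact abs_le.2 ⟨by linarith, by linarith⟩) hvtilde0 hvtilderec hvv T
  -- The splitting `⟨g, w - z⟩ = ⟨g̃, w - z⟩ + ⟨g - g̃, w̃ - z⟩ + ⟨g - g̃, w - w̃⟩`.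
  have hsplit {k : ℕ} (g g' w w' z : Fin k → ℝ) : ∑ i, g i * (w i - z i) =
      ∑ i, g' i * (w i - z i) + ∑ i, (g i - g' i) * (w' i - z i) +
        ∑ i, (g i - g' i) * (w i - w' i) := by
    rw [← Finset.sum_add_distrib, ← Finset.sum_add_distrib]
    exact Finset.sum_congr rfl fun i _ => by ring
  have hsum : ∑ t ∈ Finset.range T,
          ((∑ i, -(∑ j, A i j * v t j) * (u t i - uu i)) +
            ∑ j, (∑ i, A i j * u t i) * (v t j - vv j)) ≤
      2 / η * Real.log ((m : ℝ) * n) + 5 * η * T + ∑ t ∈ Finset.range T,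
            ((∑ i, (-(∑ j, A i j * v t j) - -A i (jseq t)) * (u t i - utilde t i)) +
              ∑ j, ((∑ i, A i j * u t i) - A (iseq t) j) * (v t j - vtilde t j)) := by
    have hlog : Real.log ((m : ℝ) * n) = Real.log m + Real.log n :=
      Real.log_mul (by exact_mod_cast hm.ne') (by exact_mod_cast hn.ne')
    have hconst : 2 / η * Real.log ((m : ℝ) * n) + 5 * η * T =
        (Real.log m / η + T * (η * 1 ^ 2 / 2)) + (Real.log n / η + T * (η * 1 ^ 2 / 2)) +
        (Real.log m / η + T * (η * 2 ^ 2 / 2)) + (Real.log n / η + T * (η * 2 ^ 2 / 2)) := by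
      rw [hlog]; ring
    have e (t : ℕ) := hsplit (fun i => -(∑ j, A i j * v t j)) (fun i => -A i (jseq t))
      (u t) (utilde t) uu
    have e' (t : ℕ) := hsplit (fun j => ∑ i, A i j * u t i) (fun j => A (iseq t) j)
      (v t) (vtilde t) vv
    simp only [e, e', Finset.sum_add_distrib]
    simp only [sub_neg_eq_add] at *
    linarith
  have hT' : (0 : ℝ) < T := by exact_mod_cast hT
  calc _ ≤ 1 / (T : ℝ) * _ := mul_le_mul_of_nonneg_left hsum (by positivity)
    _ = _ := by
      rw [mul_add]
      congr 1
      field_simp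
end
end

section
/- Let A ∈ ℝ^{m×n} with ‖A‖_max ≤ 1, let x ∈ ℝ^m_{≥0}, let Z := Σ_{j∈[n]} exp([Aᵀx]_j), and let p ∈ Δ^n be the Gibbs distribution associated with Aᵀx. Let C ≥ 1 and Z̃ ∈ [Z, CZ], and let q ∈ ℝ^n satisfy p_j ≤ q_j ≤ 1 for all j ∈ [n]. Define v_j := [Aᵀx]_j − log(Z̃ q_j). Then −log(Cn) ≤ max_{j∈[n]} v_j ≤ 0. -/
noncomputable section

/-!
The upper bound is `Z̃ q_j ≥ Z p_j = exp [Aᵀx]_j`. For the lower bound, take `j` maximizing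
`[Aᵀx]_j`: then `Z ≤ n exp [Aᵀx]_j`, so `Z̃ q_j ≤ C Z ≤ C n exp [Aᵀx]_j`. Taking logarithms
gives both inequalities.
-/

/-- With `Z = Σ_j exp([Aᵀx]_j)`, `p` the Gibbs distribution of `Aᵀx`,
`Z̃ ∈ [Z, CZ]` for `C ≥ 1`, and `q` with `p_j ≤ q_j ≤ 1`, the vector
`v_j = [Aᵀx]_j - log(Z̃ q_j)` satisfies `-log(Cn) ≤ max_j v_j ≤ 0`. -/
theorem stmt16 {m n : ℕ} (hn : 0 < n)
    (A : Matrix (Fin m) (Fin n) ℝ) (hA : ∀ i j, |A i j| ≤ 1)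
    (x : Fin m → ℝ) (hx : ∀ i, 0 ≤ x i)
    (Z : ℝ) (hZ : Z = ∑ j, Real.exp (∑ i, A i j * x i))
    (p : Fin n → ℝ) (hp : ∀ j, p j = Real.exp (∑ i, A i j * x i) / Z)
    (C : ℝ) (hC : 1 ≤ C)
    (Ztilde : ℝ) (hZtilde : Ztilde ∈ Set.Icc Z (C * Z))
    (q : Fin n → ℝ) (hq : ∀ j, p j ≤ q j ∧ q j ≤ 1)
    (v : Fin n → ℝ) (hv : ∀ j, v j = (∑ i, A i j * x i) - Real.log (Ztilde * q j)) :
    (∀ j, v j ≤ 0) ∧ ∃ j, -Real.log (C * n) ≤ v j := by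
  have hexp : ∀ j, 0 < Real.exp (∑ i, A i j * x i) := fun j => Real.exp_pos _
  have : Nonempty (Fin n) := ⟨⟨0, hn⟩⟩
  have hZpos : 0 < Z := by
    rw [hZ]
    exact Finset.sum_pos (fun j _ => hexp j) Finset.univ_nonempty
  have hn' : (0 : ℝ) < n := by exact_mod_cast hn
  have hqpos : ∀ j, 0 < q j := fun j => by
    have h := (hq j).1
    rw [hp j] at h
    exact lt_of_lt_of_le (div_pos (hexp j) hZpos) h
  have hZt : 0 < Ztilde := lt_of_lt_of_le hZpos hZtilde.1
  refine ⟨fun j => ?_, ?_⟩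
  · rw [hv j, sub_nonpos, Real.le_log_iff_exp_le (mul_pos hZt (hqpos j))]
    have h := (hq j).1
    rw [hp j, div_le_iff₀ hZpos] at h
    calc _ ≤ q j * Z := h
      _ ≤ q j * Ztilde := mul_le_mul_of_nonneg_left hZtilde.1 (hqpos j).le
      _ = Ztilde * q j := mul_comm _ _
  · -- A coordinate maximizing `Aᵀx` satisfies `Z ≤ n * exp [Aᵀx]_j`.
    obtain ⟨j, hj⟩ := Finite.exists_max (fun j => ∑ i, A i j * x i)
    have hmax : Z ≤ n * Real.exp (∑ i, A i j * x i) := by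
      rw [hZ]
      simpa using Finset.sum_le_card_nsmul Finset.univ
        (fun k => Real.exp (∑ i, A i k * x i)) _ (fun k _ => Real.exp_le_exp.mpr (hj k))
    have hC0 : 0 < C := by linarith
    have hle : Ztilde * q j ≤ C * n * Real.exp (∑ i, A i j * x i) :=
      calc Ztilde * q j ≤ Ztilde := mul_le_of_le_one_right hZt.le (hq j).2
        _ ≤ C * Z := hZtilde.2
        _ ≤ C * (n * Real.exp (∑ i, A i j * x i)) := mul_le_mul_of_nonneg_left hmax hC0.le
        _ = _ := by ring
    have hlog := Real.log_le_log (mul_pos hZt (hqpos j)) hle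
    rw [Real.log_mul (mul_pos hC0 hn').ne' (hexp j).ne', Real.log_exp] at hlog
    refine ⟨j, ?_⟩
    rw [hv j]
    linarith
end
end
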